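/- Every minimal brick has at least three vertices of degree three. -/

import Mathlib

open SimpleGraph

/-- A graph has a perfect matching. -/
def HasPerfectMatching {V : Type*} (G : SimpleGraph V) : Prop :=
  ∃ M : G.Subgraph, M.IsPerfectMatching

/-- `G` is 3-connected: at least 4 vertices, and deleting any at most 2
vertices leaves a connected graph. -/
def IsThreeConnected {V : Type*} [Fintype V] (G : SimpleGraph V) : Prop :=
  4 ≤ Fintype.card V ∧ ∀ S : Set V, S.ncard ≤ 2 → (G.induce Sᶜ).Connected

/-- A brick: a 3-connected graph such that deleting any two distinct vertices
leaves a graph with a perfect matching. -/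
def IsBrick {V : Type*} [Fintype V] (G : SimpleGraph V) : Prop :=
  IsThreeConnected G ∧
    ∀ u v : V, u ≠ v → HasPerfectMatching (G.induce ({u, v} : Set V)ᶜ)

/-- A minimal brick: a brick such that deleting any edge destroys brickness. -/
def IsMinimalBrick {V : Type*} [Fintype V] (G : SimpleGraph V) : Prop :=
  IsBrick G ∧ ∀ e ∈ G.edgeSet, ¬ IsBrick (G.deleteEdges {e})

/-!
For an edge `uv` of a minimal brick, `G - uv` has an obstruction: a barrier, or two vertices
separating `u` from `v`. One that is maximal off the component of `v` dissects `G - uv` into as many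
components as it has vertices. When it is a barrier, the component of `v` (the head) is odd and all
the others, including that of `u` (the tail), are factor-critical.

If at most two vertices were cubic, every non-cubic vertex would have, besides any given vertex, a
non-cubic neighbour. Dissect along an edge `uv` between non-cubic vertices whose head is as large as
possible, and then along an edge `uw` with `w ≠ v` non-cubic. Counting the components of each
dissection against the cut of the other, and using that `u` has at least four neighbours, shows that
the cuts are disjoint and that the second cut meets the first head in a single vertex `z`. Then the
first head without `z` lies in the second tail, which also contains `u` and a vertex of the first
cut. So the second tail is larger than the first head, contradicting the choice of `uv`.
-/

namespace MinimalBrick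

open scoped Finset

section Separates

variable {V : Type*} {G : SimpleGraph V} {T T₁ T₂ X : Finset V} {u v x y : V}

/-- The graph `G - uv`. -/
abbrev deleteEdge (G : SimpleGraph V) (u v : V) : SimpleGraph V :=
  G.deleteEdges {s(u, v)}

lemma deleteEdge_adj : (deleteEdge G u v).Adj x y ↔
    G.Adj x y ∧ ¬(x = u ∧ y = v) ∧ ¬(x = v ∧ y = u) := by
  simp [deleteEdges_adj]

lemma deleteEdge_comm (G : SimpleGraph V) (u v : V) : deleteEdge G u v = deleteEdge G v u := by
  rw [deleteEdge, Sym2.eq_swap]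

/-- `X` avoids `T` and every edge leaving `X` ends in `T`; that is, `X` is the vertex set of a
union of components of `G - T`. -/
structure Separates (G : SimpleGraph V) (T X : Finset V) : Prop where
  disjoint : Disjoint X T
  mem_or_mem : ∀ ⦃x⦄, x ∈ X → ∀ ⦃y⦄, G.Adj x y → y ∈ X ∨ y ∈ T

lemma Separates.notMem (h : Separates G T X) (hx : x ∈ X) : x ∉ T :=
  Finset.disjoint_left.1 h.disjoint hx

lemma Separates.of_deleteEdge (h : Separates (deleteEdge G u v) T X)
    (hu : u ∈ X → v ∈ X ∨ v ∈ T) (hv : v ∈ X → u ∈ X ∨ u ∈ T) : Separates G T X where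
  disjoint := h.disjoint
  mem_or_mem x hx y hxy := by
    have := @h.mem_or_mem x hx y
    grind [deleteEdge_adj]

lemma Separates.sdiff [DecidableEq V] (h : Separates G T₁ X) (hT : T₁ ⊆ T₂) :
    Separates G T₂ (X \ T₂) where
  disjoint := Finset.sdiff_disjoint
  mem_or_mem x hx y hxy := by
    have := h.mem_or_mem (Finset.mem_sdiff.1 hx).1 hxy
    grind

lemma Separates.union_right [DecidableEq V] (h : Separates G T₁ X) (hX : Disjoint X T₂) :
    Separates G (T₁ ∪ T₂) X where
  disjoint := Finset.disjoint_union_right.2 ⟨h.disjoint, hX⟩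
  mem_or_mem _ hx _ hxy := (h.mem_or_mem hx hxy).imp_right (Finset.mem_union_left T₂)

variable {ι κ : Type*} {J J' : Finset ι} {J₂ : Finset κ} {f : ι → Finset V} {g : κ → Finset V}

/-- A family of pairwise disjoint odd sets, each a union of components of `G - T`. -/
structure IsOddFamily (G : SimpleGraph V) (T : Finset V) (J : Finset ι) (f : ι → Finset V) :
    Prop where
  odd : ∀ ⦃j⦄, j ∈ J → Odd #(f j)
  separates : ∀ ⦃j⦄, j ∈ J → Separates G T (f j)
  pairwiseDisjoint : (J : Set ι).PairwiseDisjoint f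

lemma IsOddFamily.subset (h : IsOddFamily G T J f) (hJ : J' ⊆ J) : IsOddFamily G T J' f where
  odd _ hj := h.odd (hJ hj)
  separates _ hj := h.separates (hJ hj)
  pairwiseDisjoint := h.pairwiseDisjoint.subset hJ

lemma IsOddFamily.union_right [DecidableEq V] (h : IsOddFamily G T₁ J f)
    (hf : ∀ j ∈ J, Disjoint (f j) T₂) : IsOddFamily G (T₁ ∪ T₂) J f where
  odd := h.odd
  separates j hj := (h.separates hj).union_right (hf j hj)
  pairwiseDisjoint := h.pairwiseDisjoint

lemma IsOddFamily.disjSum (hf : IsOddFamily G T J f) (hg : IsOddFamily G T J₂ g)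
    (hfg : ∀ i ∈ J, ∀ j ∈ J₂, Disjoint (f i) (g j)) :
    IsOddFamily G T (J.disjSum J₂) (Sum.elim f g) where
  odd j hj := by
    obtain ⟨i, hi, rfl⟩ | ⟨i, hi, rfl⟩ := Finset.mem_disjSum.1 hj
    exacts [hf.odd hi, hg.odd hi]
  separates j hj := by
    obtain ⟨i, hi, rfl⟩ | ⟨i, hi, rfl⟩ := Finset.mem_disjSum.1 hj
    exacts [hf.separates hi, hg.separates hi]
  pairwiseDisjoint := by
    intro i hi j hj hij
    obtain ⟨a, ha, rfl⟩ | ⟨a, ha, rfl⟩ := Finset.mem_disjSum.1 hi <;>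
      obtain ⟨b, hb, rfl⟩ | ⟨b, hb, rfl⟩ := Finset.mem_disjSum.1 hj
    · exact hf.pairwiseDisjoint ha hb (by simpa using hij)
    · exact hfg a ha b hb
    · exact (hfg b hb a ha).symm
    · exact hg.pairwiseDisjoint ha hb (by simpa using hij)

variable [Fintype V]

lemma _root_.IsThreeConnected.mem_or_mem (hG : IsThreeConnected G) (hT : #T ≤ 2)
    (hX : Separates G T X) (hne : X.Nonempty) (z : V) : z ∈ X ∨ z ∈ T := by
  by_contra! hz
  obtain ⟨x, hx⟩ := hne
  obtain ⟨p⟩ := (hG.2 (T : Set V) (by simpa using hT)).preconnected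
    ⟨x, by simpa using hX.notMem hx⟩ ⟨z, by simpa using hz.2⟩
  suffices ∀ a b : ((T : Set V)ᶜ : Set V),
      (G.induce (T : Set V)ᶜ).Walk a b → (a : V) ∈ X → (b : V) ∈ X from hz.1 (this _ _ p hx)
  intro a b p
  induction p with
  | nil => exact id
  | @cons a b _ hab _ ih =>
    exact fun ha => ih ((hX.mem_or_mem ha hab).resolve_right fun hb => b.2 hb)

lemma _root_.IsThreeConnected.three_le_ncard_neighborSet (hG : IsThreeConnected G) (u : V) :
    3 ≤ (G.neighborSet u).ncard := by
  classical
  by_contra! hlt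
  set N := (Set.toFinite (G.neighborSet u)).toFinset
  have hN : #N ≤ 2 := by
    rw [← Set.ncard_eq_toFinset_card]
    omega
  have hsep : Separates G N {u} := ⟨by simp [N], by simp +contextual [N]⟩
  have huniv : insert u N = Finset.univ := Finset.eq_univ_of_forall fun z => by
    simpa using hG.mem_or_mem hN hsep (Finset.singleton_nonempty u) z
  have := hG.1
  rw [← Finset.card_univ, ← huniv] at this
  have := Finset.card_insert_le u N
  omega

lemma exists_separates_of_not_isThreeConnected (hcard : 4 ≤ Fintype.card V)
    (hG : ¬IsThreeConnected G) :
    ∃ T X : Finset V, ∃ z, #T ≤ 2 ∧ X.Nonempty ∧ Separates G T X ∧ z ∉ X ∧ z ∉ T := by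
  classical
  obtain ⟨S, hS, hconn⟩ : ∃ S : Set V, S.ncard ≤ 2 ∧ ¬(G.induce Sᶜ).Connected := by
    simpa only [IsThreeConnected, hcard, true_and, not_forall, exists_prop] using hG
  have : Nonempty (Sᶜ : Set V) := by
    rw [Set.nonempty_coe_sort, Set.nonempty_compl]
    rintro rfl
    rw [Set.ncard_univ, Nat.card_eq_fintype_card] at hS
    omega
  obtain ⟨⟨a, ha⟩, ⟨b, hb⟩, hab⟩ : ∃ a b, ¬(G.induce Sᶜ).Reachable a b := by
    simpa only [connected_iff, Preconnected, this, and_true, not_forall] using hconn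
  rw [Set.mem_compl_iff] at ha hb
  refine ⟨S.toFinset, ({y | ∃ h, (G.induce Sᶜ).Reachable ⟨a, ha⟩ ⟨y, h⟩} : Set V).toFinset, b,
    by rwa [← Set.ncard_eq_toFinset_card'], ⟨a, by simp [ha]⟩, ⟨?_, ?_⟩, by simp [hab],
    by simpa using hb⟩
  · rw [Set.disjoint_toFinset, Set.disjoint_left]
    exact fun _ ⟨h, _⟩ => h
  · intro x hx y hxy
    simp only [Set.mem_toFinset, Set.mem_ofPred_eq] at hx ⊢
    obtain ⟨hxS, hax⟩ := hx
    have hadj (hy : y ∉ S) : (G.induce Sᶜ).Adj ⟨x, hxS⟩ ⟨y, hy⟩ := hxy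
    by_cases hy : y ∈ S
    · exact .inr hy
    · exact .inl ⟨hy, hax.trans (hadj hy).reachable⟩

end Separates

section Matching

variable {V : Type*} {ι : Type*} {G : SimpleGraph V} {S T X : Finset V} {u v : V}
  {M : V → V} {J : Finset ι} {f : ι → Finset V}

/-- `M` sends every vertex of `G - S` to its partner in some perfect matching of `G - S`. Nothing is
required of `M` on `S`. -/
structure IsMatchingOff (G : SimpleGraph V) (S : Finset V) (M : V → V) : Prop where
  notMem : ∀ ⦃z⦄, z ∉ S → M z ∉ S
  adj : ∀ ⦃z⦄, z ∉ S → G.Adj z (M z)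
  apply_apply : ∀ ⦃z⦄, z ∉ S → M (M z) = z

lemma exists_isMatchingOff (h : HasPerfectMatching (G.induce (S : Set V)ᶜ)) :
    ∃ M, IsMatchingOff G S M := by
  obtain ⟨P, hP⟩ := h
  rw [Subgraph.isPerfectMatching_iff] at hP
  have hex : ∀ z ∉ S, ∃ y, ∃ (hz : z ∈ (S : Set V)ᶜ) (hy : y ∈ (S : Set V)ᶜ),
      P.Adj ⟨z, hz⟩ ⟨y, hy⟩ := fun z hz =>
    have ⟨⟨y, hy⟩, hzy, _⟩ := hP ⟨z, by simpa using hz⟩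
    ⟨y, by simpa using hz, hy, hzy⟩
  choose! M hz hM hadj using hex
  have hMS {z} (hz : z ∉ S) : M z ∉ S := by simpa using hM z hz
  refine ⟨M, fun z hz => hMS hz, fun z hz => (hadj z hz).adj_sub, fun z hz => ?_⟩
  simpa using (hP ⟨M z, hM z hz⟩).unique (hadj _ (hMS hz)) (hadj z hz).symm

lemma even_card_of_involution (hX : ∀ z ∈ X, M z ∈ X) (hinv : ∀ z ∈ X, M (M z) = z)
    (hne : ∀ z ∈ X, M z ≠ z) : Even #X := by
  have hsum : ∑ _ ∈ X, (1 : ZMod 2) = 0 :=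
    Finset.sum_involution (fun z _ => M z) (fun _ _ => by decide) (fun z hz _ => hne z hz) hX hinv
  simpa [ZMod.natCast_eq_zero_iff_even] using hsum

namespace IsMatchingOff

lemma even_card (hM : IsMatchingOff G S M) (hS : Disjoint X S) (hX : ∀ z ∈ X, M z ∈ X) :
    Even #X := by
  have hXS {z} (hz : z ∈ X) : z ∉ S := Finset.disjoint_left.1 hS hz
  exact even_card_of_involution hX (fun z hz => hM.apply_apply (hXS hz))
    fun z hz => (hM.adj (hXS hz)).ne'

lemma card_add_card_le (hM : IsMatchingOff G S M) (hf : IsOddFamily G T J f) (hST : S ⊆ T) :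
    #J + #S ≤ #T := by
  classical
  have hS {j} (hj : j ∈ J) : Disjoint (f j) S := (hf.separates hj).disjoint.mono_right hST
  have hex : ∀ j ∈ J, ∃ x ∈ f j, M x ∈ T := by
    intro j hj
    by_contra! hT
    refine Nat.not_even_iff_odd.2 (hf.odd hj) (hM.even_card (hS hj) fun z hz => ?_)
    have hadj := hM.adj (Finset.disjoint_left.1 (hS hj) hz)
    exact ((hf.separates hj).mem_or_mem hz hadj).resolve_right (hT z hz)
  obtain rfl | ⟨i, hi⟩ := J.eq_empty_or_nonempty
  · simpa using Finset.card_le_card hST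
  have : Nonempty V := ⟨(hex i hi).choose⟩
  choose! x hxf hxT using hex
  have hxS {j} (hj : j ∈ J) : x j ∉ S := Finset.disjoint_left.1 (hS hj) (hxf j hj)
  have hle : #J ≤ #(T \ S) := by
    refine Finset.card_le_card_of_injOn (fun j => M (x j))
      (fun j hj => Finset.mem_sdiff.2 ⟨hxT j hj, hM.notMem (hxS hj)⟩) fun j hj k hk hjk => ?_
    have hxx : x j = x k := by
      rw [← hM.apply_apply (hxS hj), ← hM.apply_apply (hxS hk)]
      exact congrArg M hjk
    exact hf.pairwiseDisjoint.elim_finset hj hk (x j) (hxf j hj) (hxx ▸ hxf k hk)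
  rw [Finset.card_sdiff_of_subset hST] at hle
  have := Finset.card_le_card hST
  omega

lemma deleteEdge (hM : IsMatchingOff G S M) (huv : u ∉ S → M u ≠ v) :
    IsMatchingOff (deleteEdge G u v) S M where
  notMem := hM.notMem
  adj z hz := by
    have := hM.adj hz
    have := hM.notMem hz
    have := hM.apply_apply hz
    grind [deleteEdge_adj]
  apply_apply := hM.apply_apply

end IsMatchingOff

lemma IsOddFamily.of_deleteEdge (hf : IsOddFamily (deleteEdge G u v) T J f)
    (hu : ∀ j ∈ J, u ∈ f j → v ∈ f j ∨ v ∈ T) (hv : ∀ j ∈ J, v ∈ f j → u ∈ f j ∨ u ∈ T) :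
    IsOddFamily G T J f where
  odd := hf.odd
  separates j hj := (hf.separates hj).of_deleteEdge (hu j hj) (hv j hj)
  pairwiseDisjoint := hf.pairwiseDisjoint

end Matching

section Brick

variable {V : Type*} [Fintype V] {ι : Type*} {G : SimpleGraph V} {T : Finset V} {x y z : V}
  {J : Finset ι} {f : ι → Finset V}

lemma _root_.IsBrick.exists_isMatchingOff [DecidableEq V] (hG : IsBrick G) (hxy : x ≠ y) :
    ∃ M, IsMatchingOff G {x, y} M :=
  MinimalBrick.exists_isMatchingOff (by rw [Finset.coe_pair]; exact hG.2 x y hxy)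

lemma _root_.IsBrick.even_card (hG : IsBrick G) : Even (Fintype.card V) := by
  classical
  have hcard := hG.1.1
  obtain ⟨x, y, hxy⟩ := Fintype.exists_pair_of_one_lt_card (α := V) (by omega)
  obtain ⟨M, hM⟩ := hG.exists_isMatchingOff hxy
  have hcompl := Finset.card_compl ({x, y} : Finset V)
  have heven : Even #({x, y} : Finset V)ᶜ := hM.even_card disjoint_compl_left fun z hz =>
    Finset.mem_compl.2 (hM.notMem (Finset.mem_compl.1 hz))
  rw [Finset.card_pair hxy] at hcompl
  grind

lemma _root_.IsBrick.card_add_two_le (hG : IsBrick G) (hf : IsOddFamily G T J f) (hT : 2 ≤ #T) :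
    #J + 2 ≤ #T := by
  classical
  obtain ⟨x, hx, y, hy, hxy⟩ := Finset.one_lt_card.1 hT
  obtain ⟨M, hM⟩ := hG.exists_isMatchingOff hxy
  simpa [Finset.card_pair hxy] using hM.card_add_card_le hf (by grind)

lemma _root_.IsBrick.card_le_card_sub_two (hG : IsBrick G) (hf : IsOddFamily G T J f) (hz : z ∉ T)
    (hzf : ∀ j ∈ J, z ∉ f j) : #J ≤ #T - 2 := by
  by_cases hT : 2 ≤ #T
  · exact Nat.le_sub_of_add_le (hG.card_add_two_le hf hT)
  · suffices J = ∅ by simp [this]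
    refine Finset.eq_empty_of_forall_notMem fun j hj => ?_
    have hne : (f j).Nonempty := Finset.card_pos.1 (hf.odd hj).pos
    exact (hG.1.mem_or_mem (by omega) (hf.separates hj) hne z).elim (hzf j hj) hz

end Brick

variable {V : Type*} [Fintype V]

/-- The vertex set of the component of `G - T` containing `x`; it is `{x}` if `x ∈ T`. -/
noncomputable def component (G : SimpleGraph V) (T : Finset V) (x : V) : Finset V :=
  open Classical in {y | (G.induce (T : Set V)ᶜ).spanningCoe.Reachable x y}

section Component

variable {G : SimpleGraph V} {T T₁ T₂ X : Finset V} {x y z : V}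

lemma mem_component : y ∈ component G T x ↔ (G.induce (T : Set V)ᶜ).spanningCoe.Reachable x y := by
  simp [component]

lemma mem_component_self : x ∈ component G T x :=
  mem_component.2 .rfl

lemma component_eq_of_mem (h : y ∈ component G T x) : component G T y = component G T x := by
  ext z
  rw [mem_component] at h
  rw [mem_component, mem_component]
  exact ⟨h.trans, h.symm.trans⟩

lemma component_subset_of_forall_adj (hx : x ∈ X)
    (h : ∀ a ∈ X, a ∈ component G T x → a ∉ T → ∀ b, G.Adj a b → b ∉ T → b ∈ X) :
    component G T x ⊆ X := by
  intro y hy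
  rw [mem_component, reachable_iff_reflTransGen] at hy
  induction hy with
  | refl => exact hx
  | tail hxa hab ih =>
    rw [← reachable_iff_reflTransGen] at hxa
    simp only [map_adj, comap_adj, Function.Embedding.subtype_apply, Subtype.exists] at hab
    obtain ⟨a, ha, b, hb, hab, rfl, rfl⟩ := hab
    exact h a ih (mem_component.2 hxa) ha b hab hb

lemma Separates.component_subset (h : Separates G T X) (hx : x ∈ X) : component G T x ⊆ X :=
  component_subset_of_forall_adj hx fun _ ha _ _ _ hab hb => (h.mem_or_mem ha hab).resolve_right hb

lemma mem_component_of_adj (hy : y ∈ component G T x) (hyT : y ∉ T) (hyz : G.Adj y z)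
    (hz : z ∉ T) : z ∈ component G T x := by
  rw [mem_component] at *
  refine hy.trans (Adj.reachable ?_)
  simp [hyT, hz, hyz]

lemma separates_component (hx : x ∉ T) : Separates G T (component G T x) := by
  classical
  have h : component G T x ⊆ Tᶜ :=
    component_subset_of_forall_adj (by simpa using hx) (by simp)
  refine ⟨Finset.disjoint_left.2 fun y hy => by simpa using h hy, fun y hy z hyz => ?_⟩
  by_cases hz : z ∈ T
  · exact .inr hz
  · exact .inl (mem_component_of_adj hy (by simpa using h hy) hyz hz)

lemma component_subset_component (h : Disjoint (component G T₁ x) T₂) :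
    component G T₁ x ⊆ component G T₂ x := by
  have hT₂ {a} (ha : a ∈ component G T₁ x) : a ∉ T₂ := Finset.disjoint_left.1 h ha
  exact component_subset_of_forall_adj mem_component_self fun a ha ha' haT b hab hb =>
    mem_component_of_adj ha (hT₂ ha') hab (hT₂ (mem_component_of_adj ha' haT hab hb))

end Component

variable [DecidableEq V] {G H : SimpleGraph V} {S T X K P C : Finset V} {u v w x y p q : V}

/-- The components of `G - T`, as vertex sets. -/
noncomputable def components (G : SimpleGraph V) (T : Finset V) : Finset (Finset V) :=
  Tᶜ.image (component G T)

/-- The components of `G - T` with an odd number of vertices. -/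
noncomputable def oddComponents (G : SimpleGraph V) (T : Finset V) : Finset (Finset V) :=
  {P ∈ components G T | Odd #P}

section Components

lemma mem_components : P ∈ components G T ↔ ∃ x, x ∉ T ∧ component G T x = P := by
  simp [components]

lemma component_mem_components (hx : x ∉ T) : component G T x ∈ components G T :=
  mem_components.2 ⟨x, hx, rfl⟩

lemma mem_oddComponents : P ∈ oddComponents G T ↔ P ∈ components G T ∧ Odd #P :=
  Finset.mem_filter

lemma nonempty_of_mem_components (hP : P ∈ components G T) : P.Nonempty := by
  obtain ⟨x, -, rfl⟩ := mem_components.1 hP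
  exact ⟨x, mem_component_self⟩

lemma component_eq_of_mem_components (hP : P ∈ components G T) (hx : x ∈ P) :
    component G T x = P := by
  obtain ⟨y, -, rfl⟩ := mem_components.1 hP
  exact component_eq_of_mem hx

lemma separates_of_mem_components (hP : P ∈ components G T) : Separates G T P := by
  obtain ⟨x, hx, rfl⟩ := mem_components.1 hP
  exact separates_component hx

lemma pairwiseDisjoint_components (G : SimpleGraph V) (T : Finset V) :
    (components G T : Set (Finset V)).PairwiseDisjoint id := by
  intro P hP Q hQ hne
  refine Finset.disjoint_left.2 fun x hxP hxQ => hne ?_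
  rw [← component_eq_of_mem_components hP hxP, ← component_eq_of_mem_components hQ hxQ]

lemma biUnion_components_filter_subset (hX : Separates G T X) :
    {P ∈ components G T | P ⊆ X}.biUnion id = X := by
  ext x
  simp only [Finset.mem_biUnion, Finset.mem_filter, id]
  constructor
  · rintro ⟨P, ⟨-, hPX⟩, hx⟩
    exact hPX hx
  · exact fun hx => ⟨component G T x,
      ⟨component_mem_components (hX.notMem hx), hX.component_subset hx⟩, mem_component_self⟩

lemma odd_card_oddComponents_filter_subset_iff (hX : Separates G T X) :
    Odd #{P ∈ oddComponents G T | P ⊆ X} ↔ Odd #X := by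
  have hdisj : (({P ∈ components G T | P ⊆ X} : Finset _) : Set (Finset V)).PairwiseDisjoint id :=
    (pairwiseDisjoint_components G T).subset (Finset.filter_subset _ _)
  conv_rhs => rw [← biUnion_components_filter_subset hX, Finset.card_biUnion hdisj]
  simp only [Finset.odd_sum_iff_odd_card_odd, id, oddComponents, Finset.filter_filter, and_comm]

lemma separates_compl (G : SimpleGraph V) (T : Finset V) : Separates G T Tᶜ where
  disjoint := disjoint_compl_left
  mem_or_mem x _ y _ := by simpa using em' (y ∈ T)

lemma Separates.of_union_compl (hX : Separates G (T ∪ Kᶜ) X) (hle : H ≤ G)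
    (hK : Separates H S K) : Separates H (S ∪ T) X := by
  have hXK : X ⊆ K := fun x hx => by
    have := hX.notMem hx
    grind [Finset.mem_compl]
  refine ⟨Finset.disjoint_left.2 fun x hx => ?_, fun x hx y hxy => ?_⟩
  · have := hX.notMem hx
    have := hK.notMem (hXK hx)
    grind
  · have := hX.mem_or_mem hx (hle hxy)
    have := hK.mem_or_mem (hXK hx) hxy
    grind [Finset.mem_compl]

lemma odd_card_oddComponents_iff : Odd #(oddComponents G T) ↔ Odd #Tᶜ := by
  rw [← odd_card_oddComponents_filter_subset_iff (separates_compl G T), Finset.filter_true_of_mem]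
  exact fun P hP => Finset.subset_compl_iff_disjoint_right.2
    (separates_of_mem_components (mem_oddComponents.1 hP).1).disjoint

end Components

section OddFamily

variable {ι : Type*} {J : Finset ι} {f : ι → Finset V}

lemma isOddFamily_oddComponents (G : SimpleGraph V) (T : Finset V) :
    IsOddFamily G T (oddComponents G T) id where
  odd _ hP := (mem_oddComponents.1 hP).2
  separates _ hP := separates_of_mem_components (mem_oddComponents.1 hP).1
  pairwiseDisjoint := (pairwiseDisjoint_components G T).subset (Finset.filter_subset _ _)

lemma IsOddFamily.card_le_card_oddComponents (h : IsOddFamily G T J f) :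
    #J ≤ #(oddComponents G T) := by
  have hex : ∀ j ∈ J, ∃ P, P ∈ oddComponents G T ∧ P ⊆ f j := by
    intro j hj
    have := (odd_card_oddComponents_filter_subset_iff (h.separates hj)).2 (h.odd hj)
    obtain ⟨P, hP⟩ := Finset.card_pos.1 this.pos
    exact ⟨P, Finset.mem_filter.1 hP⟩
  choose! P hP hPf using hex
  refine Finset.card_le_card_of_injOn P hP fun i hi j hj hij => ?_
  obtain ⟨x, hx⟩ := nonempty_of_mem_components (mem_oddComponents.1 (hP i hi)).1
  exact h.pairwiseDisjoint.elim_finset hi hj x (hPf i hi hx) (hPf j hj (hij ▸ hx))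

lemma IsOddFamily.of_union_compl (hf : IsOddFamily G (T ∪ Kᶜ) J f) (hle : H ≤ G)
    (hK : Separates H S K) : IsOddFamily H (S ∪ T) J f where
  odd := hf.odd
  separates _ hj := (hf.separates hj).of_union_compl hle hK
  pairwiseDisjoint := hf.pairwiseDisjoint

end OddFamily

/-- A set of at least two vertices whose deletion leaves at least as many odd components. It
obstructs bicriticality: deleting two of its vertices leaves a graph without a perfect matching. -/
structure IsBarrier (G : SimpleGraph V) (T : Finset V) : Prop where
  two_le_card : 2 ≤ #T
  card_le : #T ≤ #(oddComponents G T)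

section Barrier

variable {ι : Type*} {J : Finset ι} {f : ι → Finset V}

lemma IsBarrier.of_isOddFamily (hV : Even (Fintype.card V)) (hT : 2 ≤ #T)
    (hf : IsOddFamily G T J f) (hJ : #T ≤ #J + 1) : IsBarrier G T where
  two_le_card := hT
  card_le := by
    have hodd := odd_card_oddComponents_iff (G := G) (T := T)
    have hcompl := Finset.card_compl T
    have hle := Finset.card_le_univ T
    have := hf.card_le_card_oddComponents
    grind

lemma IsBarrier.left_notMem (hG : IsBrick G) (hT : IsBarrier (deleteEdge G u v) T) : u ∉ T := by
  intro hu
  have hf : IsOddFamily G T (oddComponents (deleteEdge G u v) T) id :=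
    (isOddFamily_oddComponents _ _).of_deleteEdge
      (fun P hP huP => absurd hu (((isOddFamily_oddComponents _ _).separates hP).notMem huP))
      fun _ _ _ => .inr hu
  have := hG.card_add_two_le hf hT.two_le_card
  have := hT.card_le
  omega

lemma IsBarrier.right_notMem (hG : IsBrick G) (hT : IsBarrier (deleteEdge G u v) T) : v ∉ T :=
  IsBarrier.left_notMem hG (deleteEdge_comm G u v ▸ hT)

lemma ncard_oddComponents_le {W : Type*} {H : SimpleGraph W} {φ : W → V}
    (hφ : Function.Injective φ) (hT : ∀ x, x ∉ T ↔ x ∈ Set.range φ)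
    (hadj : ∀ a b, G.Adj (φ a) (φ b) → H.Adj a b) :
    H.oddComponents.ncard ≤ #(oddComponents G T) := by
  classical
  have := Finite.of_injective φ hφ
  have := Fintype.ofFinite W
  have (c : H.ConnectedComponent) : Fintype c.supp := Fintype.ofFinite _
  have : Fintype H.oddComponents := Fintype.ofFinite _
  have hf : IsOddFamily G T H.oddComponents.toFinset fun c => c.supp.toFinset.image φ := by
    refine ⟨fun c hc => ?_, fun c _ => ⟨?_, fun x hx y hxy => ?_⟩, fun c _ d _ hcd => ?_⟩
    · rw [Finset.card_image_of_injective _ hφ, ← Set.ncard_eq_toFinset_card']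
      simpa using hc
    · refine Finset.disjoint_left.2 fun x hx => (hT x).2 ?_
      obtain ⟨a, -, rfl⟩ := Finset.mem_image.1 hx
      exact ⟨a, rfl⟩
    · obtain ⟨a, ha, rfl⟩ := Finset.mem_image.1 hx
      rw [Set.mem_toFinset, ConnectedComponent.mem_supp_iff] at ha
      by_cases hy : y ∈ T
      · exact .inr hy
      · obtain ⟨b, rfl⟩ := (hT y).1 hy
        refine .inl (Finset.mem_image_of_mem _ ?_)
        rw [Set.mem_toFinset, ConnectedComponent.mem_supp_iff, ← ha]
        exact ConnectedComponent.eq.2 (hadj a b hxy).reachable.symm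
    · refine (Finset.disjoint_image hφ).2 (Set.disjoint_toFinset.2 ?_)
      exact pairwise_disjoint_supp_connectedComponent H hcd
  rw [Set.ncard_eq_toFinset_card']
  exact hf.card_le_card_oddComponents

lemma exists_isBarrier_of_not_hasPerfectMatching (hV : Even (Fintype.card V)) (hxy : x ≠ y)
    (h : ¬HasPerfectMatching (G.induce ({x, y} : Set V)ᶜ)) : ∃ T, IsBarrier G T := by
  classical
  rw [HasPerfectMatching, SimpleGraph.tutte, not_forall_not] at h
  obtain ⟨U, hU⟩ := h
  set T : Finset V := {x, y} ∪ U.toFinset.image Subtype.val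
  have hcard : #T = 2 + U.ncard := by
    rw [Finset.card_union_of_disjoint, Finset.card_pair hxy,
      Finset.card_image_of_injective _ Subtype.val_injective, Set.ncard_eq_toFinset_card']
    refine Finset.disjoint_right.2 fun z hz => ?_
    obtain ⟨⟨w, hw⟩, -, rfl⟩ := Finset.mem_image.1 hz
    simpa using hw
  have hodd := hU.trans_le (ncard_oddComponents_le (G := G) (T := T) (φ := fun z => z.1.1)
    (Subtype.val_injective.comp Subtype.val_injective) (fun z => ?_) fun a b hab => ?_)
  · exact ⟨T, .of_isOddFamily hV (by omega) (isOddFamily_oddComponents G T) (by omega)⟩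
  · simp [T]
    tauto
  · have ha := a.2
    have hb := b.2
    simp_all

end Barrier

/-- The induced subgraph `G[K]` is factor-critical. This is expressed through Tutte's condition: `K`
is odd and, for every nonempty `T ⊆ K`, the graph `G[K] - T`, whose components are those of
`G - (T ∪ Kᶜ)`, has fewer than `|T|` odd components. -/
structure IsFactorCritical (G : SimpleGraph V) (K : Finset V) : Prop where
  odd_card : Odd #K
  card_oddComponents_lt : ∀ ⦃T⦄, T ⊆ K → T.Nonempty → #(oddComponents G (T ∪ Kᶜ)) < #T

namespace IsFactorCritical

lemma card_lt (hK : IsFactorCritical G K) {ι : Type*} {J : Finset ι} {f : ι → Finset V}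
    (hT : T ⊆ K) (hne : T.Nonempty) (hf : IsOddFamily G (T ∪ Kᶜ) J f) : #J < #T :=
  hf.card_le_card_oddComponents.trans_lt (hK.card_oddComponents_lt hT hne)

lemma odd_card_of_unique_exit (hK : IsFactorCritical G K) (hX : X ⊆ K) (hp : p ∈ X)
    (hexit : ∀ x ∈ X, ∀ y ∈ K \ X, G.Adj x y → x = p) : Odd #X := by
  by_contra heven
  have hodd : Odd #(X.erase p) := by
    have := Finset.card_erase_add_one hp
    grind
  have hsep : Separates G ({p} ∪ Kᶜ) (X.erase p) :=
    ⟨Finset.disjoint_left.2 (by grind [Finset.mem_compl]), by grind [Finset.mem_compl]⟩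
  have hf : IsOddFamily G ({p} ∪ Kᶜ) {X.erase p} id :=
    ⟨by simpa using hodd, by simpa using hsep, by simp⟩
  simpa using hK.card_lt (Finset.singleton_subset_iff.2 (hX hp)) (Finset.singleton_nonempty p) hf

lemma subset_of_bridge (hK : IsFactorCritical G K) (hX : X ⊆ K) (hp : p ∈ X)
    (hbridge : ∀ x ∈ X, ∀ y ∈ K \ X, G.Adj x y → x = p ∧ y = q) : K ⊆ X := by
  by_contra hKX
  obtain ⟨r, hr, hbridge'⟩ : ∃ r ∈ K \ X, ∀ y ∈ K \ X, ∀ x ∈ X, G.Adj x y → y = r := by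
    by_cases hq : q ∈ K \ X
    · exact ⟨q, hq, fun y hy x hx hxy => (hbridge x hx y hy hxy).2⟩
    · obtain ⟨r, hr⟩ := Finset.sdiff_nonempty.2 hKX
      exact ⟨r, hr, fun y hy x hx hxy => absurd ((hbridge x hx y hy hxy).2 ▸ hy) hq⟩
  have hoddX : Odd #X :=
    hK.odd_card_of_unique_exit hX hp fun x hx y hy hxy => (hbridge x hx y hy hxy).1
  have hoddKX : Odd #(K \ X) :=
    hK.odd_card_of_unique_exit Finset.sdiff_subset hr fun y hy x hx hyx =>
      hbridge' y hy x (by grind) hyx.symm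
  have := Finset.card_sdiff_add_card_eq_card hX
  have := hK.odd_card
  grind

end IsFactorCritical

/-- `T` witnesses that `G - uv` is not a brick: either `T` is a barrier of `G - uv`, or `T` consists
of two vertices separating `u` from `v` in `G - uv`. -/
structure IsObstruction (G : SimpleGraph V) (u v : V) (T : Finset V) : Prop where
  left_notMem : u ∉ T
  right_notMem : v ∉ T
  isBarrier_or : IsBarrier (deleteEdge G u v) T ∨
    #T = 2 ∧ v ∉ component (deleteEdge G u v) T u

section Obstruction

lemma IsObstruction.symm (hT : IsObstruction G u v T) : IsObstruction G v u T where
  left_notMem := hT.right_notMem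
  right_notMem := hT.left_notMem
  isBarrier_or := by
    rw [deleteEdge_comm]
    refine hT.isBarrier_or.imp_right (And.imp_right fun hv hu => hv ?_)
    exact component_eq_of_mem hu ▸ mem_component_self

lemma isObstruction_of_isBarrier (hG : IsBrick G) (hT : IsBarrier (deleteEdge G u v) T) :
    IsObstruction G u v T where
  left_notMem := hT.left_notMem hG
  right_notMem := hT.right_notMem hG
  isBarrier_or := .inl hT

lemma exists_isObstruction_of_separates (hcard : 4 ≤ Fintype.card V)
    (hX : Separates (deleteEdge G u v) T X) (hT : #T ≤ 2) (hu : u ∈ X) (hv : v ∉ X) (hvT : v ∉ T) :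
    ∃ S, IsObstruction G u v S := by
  have hTuv : T ⊆ ({u, v} : Finset V)ᶜ := by
    have := hX.notMem hu
    grind [Finset.mem_compl]
  have huv : 2 ≤ #({u, v} : Finset V)ᶜ := by
    have := Finset.card_compl ({u, v} : Finset V)
    have := Finset.card_le_two (a := u) (b := v)
    omega
  obtain ⟨S, hTS, hSuv, hS⟩ := Finset.exists_subsuperset_card_eq hTuv hT huv
  have huS : u ∉ S := fun h => by simpa using hSuv h
  exact ⟨S, huS, fun h => by simpa using hSuv h, .inr ⟨hS, fun h =>
    hv (Finset.mem_sdiff.1 ((hX.sdiff hTS).component_subset (Finset.mem_sdiff.2 ⟨hu, huS⟩) h)).1⟩⟩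

lemma _root_.IsThreeConnected.exists_isObstruction (hG : IsThreeConnected G)
    (h : ¬IsThreeConnected (deleteEdge G u v)) : ∃ T, IsObstruction G u v T := by
  obtain ⟨T, X, z, hT, hne, hX, hz⟩ := exists_separates_of_not_isThreeConnected hG.1 h
  by_cases hu : u ∈ X → v ∈ X ∨ v ∈ T
  · by_cases hv : v ∈ X → u ∈ X ∨ u ∈ T
    · have := hG.mem_or_mem hT (hX.of_deleteEdge hu hv) hne z
      tauto
    · push Not at hv
      rw [deleteEdge_comm] at hX
      obtain ⟨S, hS⟩ := exists_isObstruction_of_separates hG.1 hX hT hv.1 hv.2.1 hv.2.2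
      exact ⟨S, hS.symm⟩
  · push Not at hu
    exact exists_isObstruction_of_separates hG.1 hX hT hu.1 hu.2.1 hu.2.2

lemma _root_.IsMinimalBrick.exists_isObstruction (hG : IsMinimalBrick G) (huv : G.Adj u v) :
    ∃ T, IsObstruction G u v T := by
  by_cases hconn : IsThreeConnected (deleteEdge G u v)
  · obtain ⟨x, y, hxy, hM⟩ : ∃ x y, x ≠ y ∧
        ¬HasPerfectMatching ((deleteEdge G u v).induce ({x, y} : Set V)ᶜ) := by
      simpa [IsBrick, hconn] using hG.2 s(u, v) huv
    obtain ⟨T, hT⟩ := exists_isBarrier_of_not_hasPerfectMatching hG.1.even_card hxy hM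
    exact ⟨T, isObstruction_of_isBarrier hG.1 hT⟩
  · exact hG.1.1.exists_isObstruction hconn

end Obstruction

/-- A decomposition of `G` recording why `G - uv` is not a brick: deleting the edge `uv` and the
vertices of `cut` leaves as many components as there are vertices in `cut`, with `u` and `v` in
different components, and, unless `cut` has just two vertices, the component of `v` is odd and all
the others are factor-critical. -/
structure Dissection (G : SimpleGraph V) (u v : V) where
  cut : Finset V
  adj : G.Adj u v
  left_notMem_cut : u ∉ cut
  right_notMem_cut : v ∉ cut
  card_components : #(components (deleteEdge G u v) cut) = #cut
  component_ne : component (deleteEdge G u v) cut u ≠ component (deleteEdge G u v) cut v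
  card_cut_eq_two_or : #cut = 2 ∨ Odd #(component (deleteEdge G u v) cut v) ∧
    ∀ P ∈ components (deleteEdge G u v) cut, P ≠ component (deleteEdge G u v) cut v →
      IsFactorCritical G P

section ExistsDissection

/-- `T` is an obstruction for `uv` that cannot be enlarged without meeting the component of `v`. -/
structure IsMaximalObstruction (G : SimpleGraph V) (u v : V) (T : Finset V) : Prop extends
    IsObstruction G u v T where
  eq_of_subset : ∀ ⦃S⦄, IsObstruction G u v S → T ⊆ S →
    Disjoint (component (deleteEdge G u v) T v) S → T = S

lemma IsBarrier.exists_pair_oddComponents (hG : IsBrick G) (hT : IsBarrier (deleteEdge G u v) T) :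
    #(oddComponents (deleteEdge G u v) T) = #T ∧
    component (deleteEdge G u v) T u ≠ component (deleteEdge G u v) T v ∧
    component (deleteEdge G u v) T u ∈ oddComponents (deleteEdge G u v) T ∧
    component (deleteEdge G u v) T v ∈ oddComponents (deleteEdge G u v) T := by
  set O := oddComponents (deleteEdge G u v) T
  set A := component (deleteEdge G u v) T u
  set B := component (deleteEdge G u v) T v
  have hf : IsOddFamily G T (O \ {A, B}) id := by
    have hO := (isOddFamily_oddComponents (deleteEdge G u v) T).subset
      (Finset.sdiff_subset (t := {A, B}))
    have hcell {P x} (hP : P ∈ O \ {A, B}) (hx : x ∈ P) : component (deleteEdge G u v) T x = P :=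
      component_eq_of_mem_components (mem_oddComponents.1 (Finset.mem_sdiff.1 hP).1).1 hx
    exact hO.of_deleteEdge (fun P hP hu => by have := hcell hP hu; grind)
      fun P hP hv => by have := hcell hP hv; grind
  have := hG.card_add_two_le hf hT.two_le_card
  have hle : #T ≤ #O := hT.card_le
  have hpair : #(O ∩ {A, B}) = 2 ∧ #O = #T := by
    have := Finset.card_sdiff_add_card_inter O {A, B}
    have : #(O ∩ {A, B}) ≤ 2 :=
      (Finset.card_le_card Finset.inter_subset_right).trans Finset.card_le_two
    omega
  have hne : A ≠ B := by
    intro h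
    have := Finset.card_le_card (Finset.inter_subset_right (s₁ := O) (s₂ := {A, B}))
    simp_all
  have hsub : {A, B} ⊆ O := by
    rw [← Finset.inter_eq_right]
    exact Finset.eq_of_subset_of_card_le Finset.inter_subset_right (by simp [hne, hpair.1])
  exact ⟨hpair.2, hne, hsub (by simp), hsub (by simp)⟩

lemma IsObstruction.card_components_eq_two (hG : IsBrick G) (hT : IsObstruction G u v T)
    (h2 : #T = 2)
    (hne : component (deleteEdge G u v) T u ≠ component (deleteEdge G u v) T v) :
    #(components (deleteEdge G u v) T) = 2 := by
  rw [Finset.card_eq_two]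
  refine ⟨_, _, hne, Finset.Subset.antisymm (fun P hP => ?_) (Finset.insert_subset
    (component_mem_components hT.left_notMem) (Finset.singleton_subset_iff.2
    (component_mem_components hT.right_notMem)))⟩
  by_contra hPuv
  have hu : u ∉ P := fun h => by have := component_eq_of_mem_components hP h; grind
  have hv : v ∉ P := fun h => by have := component_eq_of_mem_components hP h; grind
  have hPsep : Separates G T P := (separates_of_mem_components hP).of_deleteEdge
    (fun h => absurd h hu) fun h => absurd h hv
  exact (hG.1.mem_or_mem h2.le hPsep (nonempty_of_mem_components hP) u).elim hu hT.left_notMem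

lemma IsMaximalObstruction.eq_of_isOddFamily (hG : IsBrick G) (hT : IsMaximalObstruction G u v T)
    {ι : Type*} {J : Finset ι} {f : ι → Finset V} (h2 : 2 ≤ #T) (hTS : T ⊆ S)
    (hf : IsOddFamily (deleteEdge G u v) S J f) (hJ : #S ≤ #J + 1)
    (hS : Disjoint (component (deleteEdge G u v) T v) S) : T = S := by
  have hbar : IsBarrier (deleteEdge G u v) S :=
    .of_isOddFamily hG.even_card (h2.trans (Finset.card_le_card hTS)) hf hJ
  exact hT.eq_of_subset (isObstruction_of_isBarrier hG hbar) hTS hS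

namespace IsMaximalObstruction

lemma components_eq_oddComponents (hG : IsBrick G) (hT : IsMaximalObstruction G u v T)
    (hbar : IsBarrier (deleteEdge G u v) T) :
    components (deleteEdge G u v) T = oddComponents (deleteEdge G u v) T := by
  refine (Finset.filter_true_of_mem fun P hP => ?_).symm
  by_contra hodd
  obtain ⟨x, hx⟩ := nonempty_of_mem_components hP
  obtain ⟨hO, -, -, hB⟩ := hbar.exists_pair_oddComponents hG
  have hxO {Q} (hQ : Q ∈ oddComponents (deleteEdge G u v) T) : Disjoint Q {x} := by
    rw [mem_oddComponents] at hQ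
    refine Finset.disjoint_singleton_right.2 fun hxQ => hodd ?_
    rw [← component_eq_of_mem_components hP hx, component_eq_of_mem_components hQ.1 hxQ]
    exact hQ.2
  have heq := hT.eq_of_isOddFamily hG hbar.two_le_card (Finset.subset_union_left)
    ((isOddFamily_oddComponents (deleteEdge G u v) T).union_right fun _ hQ => hxO hQ)
    (by rw [hO]; exact Finset.card_union_le T {x})
    (Finset.disjoint_union_right.2 ⟨(separates_component hT.right_notMem).disjoint, hxO hB⟩)
  exact (separates_of_mem_components hP).notMem hx (heq ▸ by simp)

lemma isFactorCritical (hG : IsBrick G) (hT : IsMaximalObstruction G u v T)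
    (hbar : IsBarrier (deleteEdge G u v) T) (hP : P ∈ components (deleteEdge G u v) T)
    (hPv : P ≠ component (deleteEdge G u v) T v) : IsFactorCritical G P := by
  have hPsep := separates_of_mem_components hP
  have hdisj {Q} (hQ : Q ∈ components (deleteEdge G u v) T) (hQP : Q ≠ P) : Disjoint Q P :=
    pairwiseDisjoint_components _ _ hQ hP hQP
  have hB := component_mem_components (G := deleteEdge G u v) hT.right_notMem
  rw [hT.components_eq_oddComponents hG hbar] at hP hdisj hB
  refine ⟨(mem_oddComponents.1 hP).2, fun U hUP hne => ?_⟩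
  by_contra! hU
  have hf₁ := ((isOddFamily_oddComponents (deleteEdge G u v) T).subset
    (Finset.erase_subset P _)).union_right (T₂ := U) fun Q hQ =>
      (hdisj (Finset.mem_erase.1 hQ).2 (Finset.mem_erase.1 hQ).1).mono_right hUP
  have hf₂ := isOddFamily_oddComponents G (U ∪ Pᶜ)
  have hf := hf₁.disjSum (hf₂.of_union_compl (deleteEdges_le _) hPsep) fun Q hQ R hR =>
    (hdisj (Finset.mem_erase.1 hQ).2 (Finset.mem_erase.1 hQ).1).mono_right fun x hx => by
      have := (hf₂.separates hR).notMem hx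
      grind [Finset.mem_compl]
  have heq := hT.eq_of_isOddFamily hG hbar.two_le_card Finset.subset_union_left hf
    (by
      have := Finset.card_union_le T U
      have := hbar.card_le
      have := Finset.card_erase_add_one hP
      rw [Finset.card_disjSum]
      omega)
    (Finset.disjoint_union_right.2 ⟨(separates_component hT.right_notMem).disjoint,
      (hdisj hB hPv.symm).mono_right hUP⟩)
  obtain ⟨x, hx⟩ := hne
  exact hPsep.notMem (hUP hx) (heq ▸ Finset.mem_union_right T hx)

lemma exists_dissection (hG : IsBrick G) (huv : G.Adj u v) (hT : IsMaximalObstruction G u v T) :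
    ∃ D : Dissection G u v, D.cut = T := by
  obtain hbar | ⟨h2, hv⟩ := hT.isBarrier_or
  · obtain ⟨hO, hne, -, hB⟩ := hbar.exists_pair_oddComponents hG
    rw [← hT.components_eq_oddComponents hG hbar] at hO
    exact ⟨⟨T, huv, hT.left_notMem, hT.right_notMem, hO, hne, .inr ⟨(mem_oddComponents.1 hB).2,
      fun P hP hPv => hT.isFactorCritical hG hbar hP hPv⟩⟩, rfl⟩
  · have hne : component (deleteEdge G u v) T u ≠ component (deleteEdge G u v) T v :=
      fun h => hv (h ▸ mem_component_self)
    exact ⟨⟨T, huv, hT.left_notMem, hT.right_notMem,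
      (hT.card_components_eq_two hG h2 hne).trans h2.symm, hne, .inl h2⟩, rfl⟩

end IsMaximalObstruction

end ExistsDissection

namespace Dissection

variable {D : Dissection G u v} {E : Dissection G u w}

/-- The components left by the deletions. -/
noncomputable def cells (D : Dissection G u v) : Finset (Finset V) :=
  components (deleteEdge G u v) D.cut

/-- The cell containing `u`. -/
noncomputable def tail (D : Dissection G u v) : Finset V :=
  component (deleteEdge G u v) D.cut u

/-- The cell containing `v`. -/
noncomputable def head (D : Dissection G u v) : Finset V :=
  component (deleteEdge G u v) D.cut v

/-- The cells containing neither `u` nor `v`. -/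
noncomputable def inner (D : Dissection G u v) : Finset (Finset V) :=
  (D.cells.erase D.tail).erase D.head

lemma left_mem_tail : u ∈ D.tail := mem_component_self

lemma right_mem_head : v ∈ D.head := mem_component_self

lemma tail_mem_cells : D.tail ∈ D.cells := component_mem_components D.left_notMem_cut

lemma head_mem_cells : D.head ∈ D.cells := component_mem_components D.right_notMem_cut

lemma tail_ne_head (D : Dissection G u v) : D.tail ≠ D.head := D.component_ne

lemma mem_inner : P ∈ D.inner ↔ P ∈ D.cells ∧ P ≠ D.tail ∧ P ≠ D.head := by
  grind [inner]

lemma notMem_cut (hP : P ∈ D.cells) (hx : x ∈ P) : x ∉ D.cut :=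
  (separates_of_mem_components hP).notMem hx

lemma disjoint_cut (hP : P ∈ D.cells) : Disjoint P D.cut :=
  (separates_of_mem_components hP).disjoint

lemma eq_of_mem (hP : P ∈ D.cells) (hK : K ∈ D.cells) (hxP : x ∈ P) (hxK : x ∈ K) : P = K :=
  (pairwiseDisjoint_components _ _).elim_finset hP hK x hxP hxK

lemma exists_mem_cells (hx : x ∉ D.cut) : ∃ P ∈ D.cells, x ∈ P :=
  ⟨_, component_mem_components hx, mem_component_self⟩

lemma nonempty_of_mem_cells (hP : P ∈ D.cells) : P.Nonempty := nonempty_of_mem_components hP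

lemma adj_cases (hP : P ∈ D.cells) (hx : x ∈ P) (hxy : G.Adj x y) :
    y ∈ P ∨ y ∈ D.cut ∨ (x = u ∧ y = v) ∨ (x = v ∧ y = u) := by
  have := (separates_of_mem_components hP).mem_or_mem hx (y := y)
  grind [deleteEdge_adj]

lemma head_subset (hv : v ∈ X) (h : ∀ x ∈ X, x ∈ D.head → ∀ y ∈ D.head, G.Adj x y → y ∈ X) :
    D.head ⊆ X := by
  refine component_subset_of_forall_adj hv fun x hxX hx _ y hxy hy => ?_
  exact h x hxX hx y (mem_component_of_adj hx (notMem_cut head_mem_cells hx) hxy hy)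
    (deleteEdges_le _ hxy)

lemma left_notMem_head : u ∉ D.head := fun h =>
  D.component_ne (component_eq_of_mem h)

lemma right_notMem_tail : v ∉ D.tail := fun h =>
  D.component_ne (component_eq_of_mem h).symm

lemma mem_tail_or_mem_cut (hux : G.Adj u x) (hxv : x ≠ v) : x ∈ D.tail ∨ x ∈ D.cut := by
  have := adj_cases D.tail_mem_cells D.left_mem_tail hux
  have := D.adj.ne
  tauto

lemma left_notMem_of_ne (hP : P ∈ D.cells) (hne : P ≠ D.tail) : u ∉ P :=
  fun hu => hne (eq_of_mem hP D.tail_mem_cells hu D.left_mem_tail)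

lemma right_notMem_of_ne (hP : P ∈ D.cells) (hne : P ≠ D.head) : v ∉ P :=
  fun hv => hne (eq_of_mem hP D.head_mem_cells hv D.right_mem_head)

lemma notMem_of_adj (hP : P ∈ D.cells) (hne : P ≠ D.tail) (hux : G.Adj u x) (hxv : x ≠ v) :
    x ∉ P := fun hx =>
  (mem_tail_or_mem_cut hux hxv).elim (fun h => hne (eq_of_mem hP D.tail_mem_cells hx h))
    (notMem_cut hP hx)

lemma card_eq_add_sum (D : Dissection G u v) (X : Finset V) :
    #X = #(D.cut ∩ X) + ∑ P ∈ D.cells, #(P ∩ X) := by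
  have hX : (D.cut ∩ X) ∪ D.cells.biUnion (· ∩ X) = X := by
    ext x
    have := exists_mem_cells (D := D) (x := x)
    simp only [Finset.mem_union, Finset.mem_inter, Finset.mem_biUnion]
    grind
  rw [← Finset.card_biUnion, ← Finset.card_union_of_disjoint, hX]
  · refine Finset.disjoint_biUnion_right _ _ _ |>.2 fun P hP => ?_
    exact (disjoint_cut hP).symm.mono Finset.inter_subset_left Finset.inter_subset_left
  · exact fun P hP K hK hPK => (pairwiseDisjoint_components _ _ hP hK hPK).mono
      Finset.inter_subset_left Finset.inter_subset_left

lemma sum_cells (D : Dissection G u v) (f : Finset V → ℕ) :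
    ∑ P ∈ D.cells, f P = f D.tail + f D.head + ∑ P ∈ D.inner, f P := by
  rw [inner, ← Finset.add_sum_erase D.cells f D.tail_mem_cells,
    ← Finset.add_sum_erase (D.cells.erase D.tail) f
      (Finset.mem_erase.2 ⟨D.tail_ne_head.symm, D.head_mem_cells⟩), add_assoc]

lemma card_inner_add_two (D : Dissection G u v) : #D.inner + 2 = #D.cut := by
  have := D.sum_cells 1
  have : #D.cells = #D.cut := D.card_components
  simp only [Pi.one_apply, Finset.sum_const, smul_eq_mul, mul_one] at *
  omega

lemma card_cut_ne_two_of_mem_inner (hP : P ∈ D.inner) : #D.cut ≠ 2 := by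
  have := D.card_inner_add_two
  have := Finset.card_pos.2 ⟨P, hP⟩
  omega

lemma eq_tail_or_eq_head (h2 : #D.cut = 2) (hP : P ∈ D.cells) : P = D.tail ∨ P = D.head := by
  by_contra hne
  push Not at hne
  exact card_cut_ne_two_of_mem_inner (mem_inner.2 ⟨hP, hne⟩) h2

lemma isFactorCritical (h2 : #D.cut ≠ 2) (hP : P ∈ D.cells) (hne : P ≠ D.head) :
    IsFactorCritical G P :=
  (D.card_cut_eq_two_or.resolve_left h2).2 P hP hne

lemma isFactorCritical_of_mem_inner (hP : P ∈ D.inner) : IsFactorCritical G P :=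
  isFactorCritical (card_cut_ne_two_of_mem_inner hP) (mem_inner.1 hP).1 (mem_inner.1 hP).2.2

lemma odd_card (h2 : #D.cut ≠ 2) (hP : P ∈ D.cells) : Odd #P := by
  by_cases hne : P = D.head
  · exact hne ▸ (D.card_cut_eq_two_or.resolve_left h2).1
  · exact (isFactorCritical h2 hP hne).odd_card

lemma isOddFamily_cells (h2 : #D.cut ≠ 2) :
    IsOddFamily (deleteEdge G u v) D.cut D.cells id where
  odd _ := odd_card h2
  separates _ := separates_of_mem_components
  pairwiseDisjoint := pairwiseDisjoint_components _ _

lemma isObstruction (hG : IsBrick G) (D : Dissection G u v) : IsObstruction G u v D.cut := by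
  refine ⟨D.left_notMem_cut, D.right_notMem_cut, ?_⟩
  by_cases h2 : #D.cut = 2
  · exact .inr ⟨h2, D.right_notMem_tail⟩
  · have : #D.cells = #D.cut := D.card_components
    have := D.card_inner_add_two
    exact .inl (.of_isOddFamily hG.even_card (by omega) (isOddFamily_cells h2) (by omega))

lemma apply_left_eq {M : V → V} (h2 : #D.cut ≠ 2) (hM : IsMatchingOff G S M) (hS : S ⊆ D.cut)
    (hne : S.Nonempty) : M u = v := by
  by_contra huv
  have := (hM.deleteEdge fun _ => huv).card_add_card_le (isOddFamily_cells h2) hS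
  have : #D.cells = #D.cut := D.card_components
  have := hne.card_pos
  omega

-- A perfect matching avoiding two common vertices of the cuts would have to use both `uv` and `uw`.
lemma card_cut_inter_cut_le_one (hG : IsBrick G) (hvw : v ≠ w) (hD : #D.cut ≠ 2)
    (hE : #E.cut ≠ 2) : #(D.cut ∩ E.cut) ≤ 1 := by
  by_contra! h
  obtain ⟨s, hs, t, ht, hst⟩ := Finset.one_lt_card.1 h
  obtain ⟨M, hM⟩ := hG.exists_isMatchingOff hst
  have hne : ({s, t} : Finset V).Nonempty := Finset.insert_nonempty s {t}
  refine hvw ((apply_left_eq hD hM ?_ hne).symm.trans (apply_left_eq hE hM ?_ hne)) <;> grind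

end Dissection

/-- Two dissections `D` and `E` of edges `uv` and `uw` at a common non-cubic vertex `u`, where the
head of `D` is at least as large as the tail of `D` and as any component containing `u` that an
obstruction for `uw` leaves. -/
structure Crossing (D : Dissection G u v) (E : Dissection G u w) : Prop where
  isBrick : IsBrick G
  ne : v ≠ w
  four_le_degree : 4 ≤ (G.neighborSet u).ncard
  card_tail_le : #D.tail ≤ #D.head
  card_component_le : ∀ ⦃T⦄, IsObstruction G u w T → #(component (deleteEdge G u w) T u) ≤ #D.head

namespace Dissection

variable {D : Dissection G u v} {E : Dissection G u w}

/-- The vertices of the two cuts that may be adjacent to `X ∩ P`, for cells `X` of `D` and `P` of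
`E`. -/
def rim (D : Dissection G u v) (E : Dissection G u w) (X P : Finset V) : Finset V :=
  E.cut ∩ (X ∪ D.cut) ∪ D.cut ∩ P

lemma card_cut_inter_union (hX : X ∈ D.cells) :
    #(E.cut ∩ (X ∪ D.cut)) = #(E.cut ∩ X) + #(D.cut ∩ E.cut) := by
  rw [Finset.inter_union_distrib_left, Finset.card_union_of_disjoint, Finset.inter_comm D.cut]
  exact (disjoint_cut hX).mono Finset.inter_subset_right Finset.inter_subset_right

lemma card_rim_le (hX : X ∈ D.cells) :
    #(rim D E X P) ≤ #(E.cut ∩ X) + #(D.cut ∩ E.cut) + #(D.cut ∩ P) :=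
  card_cut_inter_union (E := E) hX ▸ Finset.card_union_le _ _

lemma rim_eq_of_disjoint (h : Disjoint D.cut P) : rim D E X P = E.cut ∩ (X ∪ D.cut) := by
  rw [rim, Finset.disjoint_iff_inter_eq_empty.1 h, Finset.union_empty]

lemma left_notMem_rim : u ∉ rim D E X P := by
  grind [rim, D.left_notMem_cut, E.left_notMem_cut]

lemma right_notMem_rim (hv : v ∉ X) : v ∉ rim D E X P := by
  grind [rim, D.right_notMem_cut]

lemma disjoint_rim (hX : X ∈ D.cells) (hP : P ∈ E.cells) : Disjoint (X ∩ P) (rim D E X P) := by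
  refine Finset.disjoint_left.2 fun x hx => ?_
  rw [Finset.mem_inter] at hx
  have := notMem_cut hX hx.1
  have := notMem_cut hP hx.2
  grind [rim]

lemma adj_inter_cases (hX : X ∈ D.cells) (hP : P ∈ E.cells) (hx : x ∈ X ∩ P) (hxy : G.Adj x y) :
    y ∈ X ∩ P ∨ y ∈ rim D E X P ∨ (x = u ∧ (y = v ∨ y = w)) ∨ ((x = v ∨ x = w) ∧ y = u) := by
  rw [Finset.mem_inter] at hx
  have := adj_cases hX hx.1 hxy
  have := adj_cases hP hx.2 hxy
  grind [rim]

end Dissection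

namespace Crossing

open Dissection

variable {D : Dissection G u v} {E : Dissection G u w}

lemma card_tail_right_le (h : Crossing D E) : #E.tail ≤ #D.head :=
  h.card_component_le (E.isObstruction h.isBrick)

lemma not_disjoint_cut_head (h : Crossing D E) : ¬Disjoint E.cut D.head := by
  intro hcut
  rw [Finset.disjoint_right] at hcut
  have hv : v ∈ E.tail := (E.mem_tail_or_mem_cut D.adj h.ne).resolve_right (hcut D.right_mem_head)
  have hhead : D.head ⊆ E.tail := by
    refine head_subset hv fun x hx hxD y hy hxy => ?_
    have := adj_cases E.tail_mem_cells hx hxy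
    have := hcut hy
    have := D.left_notMem_head
    grind
  have hle := Finset.card_le_card (Finset.insert_subset E.left_mem_tail hhead)
  rw [Finset.card_insert_of_notMem D.left_notMem_head] at hle
  have := h.card_tail_right_le
  omega

lemma separates_rim_deleteEdge (h : Crossing D E) (hX : X ∈ D.cells) (hP : P ∈ E.cells)
    (hne : P ≠ E.tail) : Separates (deleteEdge G u w) (rim D E X P) (X ∩ P) := by
  refine ⟨disjoint_rim hX hP, fun x hx y hxy => ?_⟩
  rw [deleteEdge_adj] at hxy
  have := adj_inter_cases hX hP hx hxy.1
  have := left_notMem_of_ne hP hne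
  have := notMem_of_adj hP hne D.adj h.ne
  grind

lemma separates_rim (h : Crossing D E) (hX : X ∈ D.cells) (hP : P ∈ E.cells)
    (hne : P ≠ E.tail) (hne' : X ≠ D.tail ∨ P ≠ E.head) : Separates G (rim D E X P) (X ∩ P) := by
  refine (h.separates_rim_deleteEdge hX hP hne).of_deleteEdge (fun hu => ?_) fun hw => ?_
  · exact absurd (Finset.mem_inter.1 hu).2 (left_notMem_of_ne hP hne)
  · rw [Finset.mem_inter] at hw
    obtain hXt | hPh := hne'
    · exact absurd hw.1 (notMem_of_adj hX hXt E.adj h.ne.symm)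
    · exact absurd hw.2 (right_notMem_of_ne hP hPh)

lemma separates_insert_rim (h : Crossing D E) :
    Separates G (insert u (rim D E D.tail E.head)) (D.tail ∩ E.head) := by
  have hsep := (h.separates_rim_deleteEdge D.tail_mem_cells E.head_mem_cells
    E.tail_ne_head.symm).union_right (T₂ := {u}) (by simp [E.left_notMem_head])
  rw [Finset.union_comm, ← Finset.insert_eq] at hsep
  exact hsep.of_deleteEdge (fun hu => absurd (Finset.mem_inter.1 hu).2 E.left_notMem_head)
    fun _ => .inr (Finset.mem_insert_self _ _)

lemma tail_inter_head_eq_empty (h : Crossing D E) (hcard : #(rim D E D.tail E.head) ≤ 1) :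
    D.tail ∩ E.head = ∅ := by
  by_contra hne
  have hv := h.isBrick.1.mem_or_mem
    ((Finset.card_insert_le _ _).trans (Nat.add_le_add_right hcard 1))
    h.separates_insert_rim (Finset.nonempty_iff_ne_empty.2 hne) v
  have := right_notMem_rim (D := D) (E := E) (P := E.head) D.right_notMem_tail
  have := D.right_notMem_tail
  have := D.adj.ne
  grind

lemma head_inter_eq_empty (h : Crossing D E) (hP : P ∈ E.cells) (hne : P ≠ E.tail)
    (hcard : #(rim D E D.head P) ≤ 2) : D.head ∩ P = ∅ := by
  by_contra hempty
  have hu := h.isBrick.1.mem_or_mem hcard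
    (h.separates_rim D.head_mem_cells hP hne (.inl D.tail_ne_head.symm))
    (Finset.nonempty_iff_ne_empty.2 hempty) u
  have := left_notMem_rim (D := D) (E := E) (X := D.head) (P := P)
  have := D.left_notMem_head
  grind

-- Otherwise at most one vertex besides `u` separates the rest of `D.tail ∩ E.tail` from `v`, which
-- leaves `u` with at most three neighbours.
lemma two_le_card_rim_tail (h : Crossing D E) : 2 ≤ #(rim D E D.tail E.tail) := by
  by_contra! hcard
  set R := rim D E D.tail E.tail
  have hadj {x y} (hx : x ∈ D.tail ∩ E.tail) (hxy : G.Adj x y) :=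
    adj_inter_cases D.tail_mem_cells E.tail_mem_cells hx hxy
  have hv : v ∉ R := right_notMem_rim D.right_notMem_tail
  have hsep : Separates G (insert u R) ((D.tail ∩ E.tail).erase u) := by
    have hdisj := disjoint_rim D.tail_mem_cells E.tail_mem_cells
    refine ⟨?_, fun x hx y hxy => ?_⟩
    · rw [Finset.disjoint_left] at *
      grind
    · have := hadj (Finset.mem_of_mem_erase hx) hxy
      have := D.right_notMem_tail
      have := E.right_notMem_tail
      grind
  have hempty : (D.tail ∩ E.tail).erase u = ∅ := by
    by_contra hne
    have := h.isBrick.1.mem_or_mem ((Finset.card_insert_le u R).trans hcard) hsep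
      (Finset.nonempty_iff_ne_empty.2 hne) v
    have := D.right_notMem_tail
    have := D.adj.ne
    grind
  have hnbr : G.neighborSet u ⊆ (insert v (insert w R) : Finset V) := by
    intro y hy
    have := hadj (Finset.mem_inter.2 ⟨D.left_mem_tail, E.left_mem_tail⟩) hy
    have := G.ne_of_adj hy
    have : y ∉ (D.tail ∩ E.tail).erase u := by simp [hempty]
    grind
  have hle := h.four_le_degree.trans (Set.ncard_le_ncard hnbr)
  rw [Set.ncard_coe_finset] at hle
  have := Finset.card_insert_le v (insert w R)
  have := Finset.card_insert_le w R
  omega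

end Crossing

namespace Dissection

variable {D : Dissection G u v} {E : Dissection G u w}

lemma card_cut_eq_add_sum (D : Dissection G u v) (E : Dissection G u w) :
    #E.cut = #(D.cut ∩ E.cut) + #(E.cut ∩ D.tail) + #(E.cut ∩ D.head) +
      ∑ C ∈ D.inner, #(E.cut ∩ C) := by
  have := D.card_eq_add_sum E.cut
  simp only [Finset.inter_comm _ E.cut] at *
  rw [this, D.sum_cells, add_assoc, add_assoc, add_assoc]

/-- The cells of `E` that avoid the cut of `D` and meet `X` in an odd number of vertices. -/
noncomputable def oddTraces (D : Dissection G u v) (E : Dissection G u w) (X : Finset V) :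
    Finset (Finset V) :=
  {P ∈ E.cells | Disjoint D.cut P ∧ Odd #(X ∩ P)}

lemma mem_oddTraces :
    P ∈ oddTraces D E X ↔ P ∈ E.cells ∧ Disjoint D.cut P ∧ Odd #(X ∩ P) :=
  Finset.mem_filter

lemma subset_of_disjoint_cut (hC : C ∈ D.inner) (hcut : Disjoint E.cut C)
    (hP : P ∈ E.cells) (hx : x ∈ C ∩ P) : C ⊆ P := by
  have hu : u ∉ C := left_notMem_of_ne (mem_inner.1 hC).1 (mem_inner.1 hC).2.1
  rw [Finset.disjoint_right] at hcut
  refine ((isFactorCritical_of_mem_inner hC).subset_of_bridge (X := C ∩ P) (q := x)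
    Finset.inter_subset_left hx fun y hy z hz hyz => ?_).trans Finset.inter_subset_right
  have := adj_cases hP (Finset.mem_inter.1 hy).2 hyz
  grind

lemma separates_of_subset (hC : C ∈ D.inner) (hP : P ∈ E.cells) (hCP : C ⊆ P) :
    Separates G (D.cut ∩ (P ∪ E.cut)) C := by
  obtain ⟨hC, hne, hne'⟩ := mem_inner.1 hC
  refine ⟨(disjoint_cut hC).mono_right Finset.inter_subset_left, fun x hx y hxy => ?_⟩
  have := adj_cases hC hx hxy
  have := adj_cases hP (hCP hx) hxy
  have := left_notMem_of_ne hC hne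
  have := right_notMem_of_ne hC hne'
  have := D.left_notMem_cut
  grind

lemma tail_subset_tail (h2 : #E.cut ≠ 2) (hcut : Disjoint D.cut E.tail) :
    E.tail ⊆ D.tail := by
  rw [Finset.disjoint_right] at hcut
  refine ((isFactorCritical h2 E.tail_mem_cells E.tail_ne_head).subset_of_bridge
    (X := E.tail ∩ D.tail) (q := v) Finset.inter_subset_left
    (Finset.mem_inter.2 ⟨E.left_mem_tail, D.left_mem_tail⟩)
    fun x hx y hy hxy => ?_).trans Finset.inter_subset_right
  have := adj_cases D.tail_mem_cells (Finset.mem_inter.1 hx).2 hxy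
  have := D.right_notMem_tail
  grind

lemma card_filter_subset_le (hG : IsBrick G) (hP : P ∈ E.cells) :
    #{C ∈ D.inner | C ⊆ P} ≤ #(D.cut ∩ P) + #(D.cut ∩ E.cut) - 2 := by
  rw [Finset.inter_comm D.cut E.cut, ← card_cut_inter_union hP]
  have hmem {C} (hC : C ∈ {C ∈ D.inner | C ⊆ P}) := Finset.mem_filter.1 hC
  refine hG.card_le_card_sub_two (f := id) (z := u) ⟨fun C hC => ?_, fun C hC => ?_, ?_⟩
    (fun hu => D.left_notMem_cut (Finset.mem_inter.1 hu).1) fun C hC => ?_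
  · have hC := (hmem hC).1
    exact odd_card (card_cut_ne_two_of_mem_inner hC) (mem_inner.1 hC).1
  · exact separates_of_subset (hmem hC).1 hP (hmem hC).2
  · exact (pairwiseDisjoint_components _ _).subset fun C hC => (mem_inner.1 (hmem hC).1).1
  · have hC := mem_inner.1 (hmem hC).1
    exact left_notMem_of_ne hC.1 hC.2.1

end Dissection

namespace Crossing

open Dissection

variable {D : Dissection G u v} {E : Dissection G u w}

lemma not_disjoint_head_of_isBarrier (h : Crossing D E) (hT : IsBarrier (deleteEdge G u w) T) :
    ¬Disjoint D.head T := by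
  intro hdisj
  rw [Finset.disjoint_left] at hdisj
  have hobs := isObstruction_of_isBarrier h.isBrick hT
  have hv : v ∈ component (deleteEdge G u w) T u := by
    have := D.adj.ne
    have := h.ne
    refine mem_component_of_adj mem_component_self hobs.left_notMem ?_ (hdisj D.right_mem_head)
    grind [deleteEdge_adj, D.adj]
  have hhead : D.head ⊆ component (deleteEdge G u w) T u := by
    refine head_subset hv fun x hx hxD y hyD hxy => ?_
    have := D.left_notMem_head
    refine mem_component_of_adj hx (hdisj hxD) ?_ (hdisj hyD)
    grind [deleteEdge_adj]
  have hle := Finset.card_le_card (Finset.insert_subset mem_component_self hhead)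
  rw [Finset.card_insert_of_notMem D.left_notMem_head] at hle
  have := h.card_component_le hobs
  omega

lemma card_cut_inter_head_pos (h : Crossing D E) : 0 < #(E.cut ∩ D.head) :=
  Finset.card_pos.2 (Finset.not_disjoint_iff_nonempty_inter.1 h.not_disjoint_cut_head)

lemma card_cut_inter_lt (h : Crossing D E) :
    #(D.cut ∩ E.cut) + #(E.cut ∩ D.tail) < #E.cut := by
  have := D.card_cut_eq_add_sum E
  have := h.card_cut_inter_head_pos
  omega

lemma not_disjoint_cut_of_card_cut_eq_two (h : Crossing D E) (h2 : #E.cut = 2) (hP : P ∈ E.cells) :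
    ¬Disjoint D.cut P := by
  intro hcut
  have hle : #(rim D E D.tail P) ≤ 1 := by
    rw [rim_eq_of_disjoint hcut, card_cut_inter_union D.tail_mem_cells]
    have := h.card_cut_inter_lt
    omega
  obtain rfl | rfl := eq_tail_or_eq_head h2 hP
  · have := h.two_le_card_rim_tail
    omega
  · have hempty := h.tail_inter_head_eq_empty hle
    rw [← Finset.disjoint_iff_inter_eq_empty, Finset.disjoint_left] at hempty
    have := mem_tail_or_mem_cut (D := D) E.adj h.ne.symm
    have := E.right_mem_head
    rw [Finset.disjoint_left] at hcut
    grind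

lemma odd_card_of_disjoint (h : Crossing D E) (hP : P ∈ E.cells) (hcut : Disjoint D.cut P) :
    Odd #P :=
  odd_card (fun h2 => h.not_disjoint_cut_of_card_cut_eq_two h2 hP hcut) hP

lemma tail_notMem_oddTraces (h : Crossing D E) (hX : X ∈ D.cells) (hne : X ≠ D.tail) :
    E.tail ∉ oddTraces D E X := by
  intro hE
  obtain ⟨hP, hcut, hodd⟩ := mem_oddTraces.1 hE
  have hsub := tail_subset_tail (fun h2 => h.not_disjoint_cut_of_card_cut_eq_two h2 hP hcut) hcut
  obtain ⟨x, hx⟩ := Finset.card_pos.1 hodd.pos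
  rw [Finset.mem_inter] at hx
  exact hne (eq_of_mem hX D.tail_mem_cells hx.1 (hsub hx.2))

lemma isOddFamily_erase_oddTraces (h : Crossing D E) (hX : X ∈ D.cells) :
    IsOddFamily (deleteEdge G u w) (E.cut ∩ (X ∪ D.cut)) ((oddTraces D E X).erase E.tail)
      (X ∩ ·) := by
  have hmem {P} (hP : P ∈ (oddTraces D E X).erase E.tail) :=
    mem_oddTraces.1 (Finset.mem_of_mem_erase hP)
  refine ⟨fun P hP => (hmem hP).2.2, fun P hP => ?_, fun P hP Q hQ hPQ => ?_⟩
  · rw [← rim_eq_of_disjoint (hmem hP).2.1]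
    exact h.separates_rim_deleteEdge hX (hmem hP).1 (Finset.ne_of_mem_erase hP)
  · exact (pairwiseDisjoint_components _ _ (hmem hP).1 (hmem hQ).1 hPQ).mono
      Finset.inter_subset_right Finset.inter_subset_right

lemma isOddFamily_oddTraces (h : Crossing D E) (hX : X ∈ D.cells)
    (htail : E.tail ∉ oddTraces D E X) (hhead : X = D.tail → E.head ∉ oddTraces D E X) :
    IsOddFamily G (E.cut ∩ (X ∪ D.cut)) (oddTraces D E X) (X ∩ ·) := by
  have hf := h.isOddFamily_erase_oddTraces hX
  rw [Finset.erase_eq_of_notMem htail] at hf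
  refine hf.of_deleteEdge (fun P hP hu => ?_) fun P hP hw => ?_
  · exact absurd (Finset.mem_inter.1 hu).2
      (left_notMem_of_ne (mem_oddTraces.1 hP).1 fun hPE => htail (hPE ▸ hP))
  · rw [Finset.mem_inter] at hw
    by_cases hXD : X = D.tail
    · exact absurd hw.2
        (right_notMem_of_ne (mem_oddTraces.1 hP).1 fun hPE => hhead hXD (hPE ▸ hP))
    · exact absurd hw.1 (notMem_of_adj hX hXD E.adj h.ne.symm)

lemma card_oddTraces_head_le (h : Crossing D E) :
    #(oddTraces D E D.head) ≤ #(E.cut ∩ D.head) + #(D.cut ∩ E.cut) - 2 := by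
  have hne : D.head ≠ D.tail := D.tail_ne_head.symm
  rw [← card_cut_inter_union D.head_mem_cells]
  refine h.isBrick.card_le_card_sub_two (h.isOddFamily_oddTraces D.head_mem_cells
    (h.tail_notMem_oddTraces D.head_mem_cells hne) fun hXD => absurd hXD hne) (z := u)
    (fun hu => E.left_notMem_cut (Finset.mem_inter.1 hu).1)
    fun P _ hu => D.left_notMem_head (Finset.mem_inter.1 hu).1

-- Otherwise the vertices of `E.cut` in `D.tail ∪ D.cut`, if there are at least two of them, form a
-- barrier of `G - uw` avoiding `D.head`.
lemma card_oddTraces_tail_le (h : Crossing D E) :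
    #(oddTraces D E D.tail) ≤ #(E.cut ∩ D.tail) + #(D.cut ∩ E.cut) - 1 := by
  have hX := D.tail_mem_cells
  rw [← card_cut_inter_union hX]
  by_contra! hlt
  by_cases h2 : 2 ≤ #(E.cut ∩ (D.tail ∪ D.cut))
  · refine h.not_disjoint_head_of_isBarrier (.of_isOddFamily h.isBrick.even_card h2
      (h.isOddFamily_erase_oddTraces hX) ?_) (Finset.disjoint_left.2 fun x hx hxT => ?_)
    · have := Finset.pred_card_le_card_erase (s := oddTraces D E D.tail) (a := E.tail)
      omega
    · have := notMem_cut D.head_mem_cells hx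
      have := eq_of_mem D.head_mem_cells hX hx
      have := D.tail_ne_head
      grind
  · have hrim {P} (hP : P ∈ oddTraces D E D.tail) : #(rim D E D.tail P) ≤ 1 := by
      rw [rim_eq_of_disjoint (mem_oddTraces.1 hP).2.1]
      omega
    have htail : E.tail ∉ oddTraces D E D.tail := fun hP => by
      have := h.two_le_card_rim_tail
      have := hrim hP
      omega
    have hhead : E.head ∉ oddTraces D E D.tail := fun hP => by
      simpa [h.tail_inter_head_eq_empty (hrim hP)] using (mem_oddTraces.1 hP).2.2
    have := h.isBrick.card_le_card_sub_two (h.isOddFamily_oddTraces hX htail fun _ => hhead)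
      (z := v) (fun hv => by have := D.right_notMem_tail; have := D.right_notMem_cut; grind)
      fun P _ hv => D.right_notMem_tail (Finset.mem_inter.1 hv).1
    omega

end Crossing

/-- The cells of `E` that contain at least two more vertices of the cut of `D` than inner cells of
`D`. -/
noncomputable def Dissection.richCells (D : Dissection G u v) (E : Dissection G u w) :
    Finset (Finset V) :=
  {P ∈ E.cells | #{C ∈ D.inner | C ⊆ P} + 2 ≤ #(D.cut ∩ P)}

namespace Crossing

open Dissection

variable {D : Dissection G u v} {E : Dissection G u w}

lemma card_cut_inter_cut_le_one (h : Crossing D E) (hD : #D.cut ≠ 2) :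
    #(D.cut ∩ E.cut) ≤ 1 := by
  by_cases hE : #E.cut = 2
  · have := h.card_cut_inter_lt
    omega
  · exact Dissection.card_cut_inter_cut_le_one h.isBrick h.ne hD hE

lemma card_filter_subset_eq_zero_or (h : Crossing D E) (hP : P ∈ E.cells) :
    #{C ∈ D.inner | C ⊆ P} = 0 ∨
      #{C ∈ D.inner | C ⊆ P} + 2 ≤ #(D.cut ∩ P) + #(D.cut ∩ E.cut) ∧ #(D.cut ∩ E.cut) ≤ 1 := by
  obtain h0 | hpos := Nat.eq_zero_or_pos #{C ∈ D.inner | C ⊆ P}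
  · exact .inl h0
  · obtain ⟨C, hC⟩ := Finset.card_pos.1 hpos
    have := h.card_cut_inter_cut_le_one (card_cut_ne_two_of_mem_inner (Finset.mem_filter.1 hC).1)
    have := card_filter_subset_le (D := D) h.isBrick hP
    omega

lemma oddTraces_eq_empty (h : Crossing D E) (hC : C ∈ D.inner) (hcut : Disjoint E.cut C) :
    oddTraces D E C = ∅ := by
  refine Finset.eq_empty_of_forall_notMem fun P hP => ?_
  obtain ⟨hP, hcutP, hodd⟩ := mem_oddTraces.1 hP
  obtain ⟨x, hx⟩ := Finset.card_pos.1 hodd.pos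
  have hCP : C ∈ {C ∈ D.inner | C ⊆ P} :=
    Finset.mem_filter.2 ⟨hC, subset_of_disjoint_cut hC hcut hP hx⟩
  have := Finset.card_pos.2 ⟨C, hCP⟩
  have := h.card_filter_subset_eq_zero_or hP
  have : #(D.cut ∩ P) = 0 := by
    rw [Finset.disjoint_iff_inter_eq_empty.1 hcutP, Finset.card_empty]
  omega

lemma card_oddTraces_lt (h : Crossing D E) (hC : C ∈ D.inner) (hcut : ¬Disjoint E.cut C) :
    #(oddTraces D E C) < #(E.cut ∩ C) := by
  obtain ⟨hmem, hne, -⟩ := mem_inner.1 hC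
  refine (isFactorCritical_of_mem_inner hC).card_lt (f := (C ∩ ·)) Finset.inter_subset_right
    (Finset.not_disjoint_iff_nonempty_inter.1 hcut) ?_
  have hT : E.cut ∩ (C ∪ D.cut) ∪ Cᶜ = E.cut ∩ C ∪ Cᶜ := by
    have := Finset.disjoint_right.1 (disjoint_cut hmem)
    ext x
    grind [Finset.mem_compl]
  exact hT ▸ (h.isOddFamily_oddTraces hmem (h.tail_notMem_oddTraces hmem hne)
    fun hCD => absurd hCD hne).union_right fun P _ =>
      disjoint_compl_right.mono_left Finset.inter_subset_left

lemma card_filter_disjoint_le_sum (h : Crossing D E) :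
    #{P ∈ E.cells | Disjoint D.cut P} ≤ ∑ X ∈ D.cells, #(oddTraces D E X) := by
  refine (Finset.card_le_card fun P hP => ?_).trans Finset.card_biUnion_le
  obtain ⟨hP, hcut⟩ := Finset.mem_filter.1 hP
  have hodd := h.odd_card_of_disjoint hP hcut
  rw [D.card_eq_add_sum P, Finset.disjoint_iff_inter_eq_empty.1 hcut, Finset.card_empty,
    zero_add] at hodd
  obtain ⟨X, hX, hXP⟩ : ∃ X ∈ D.cells, Odd #(X ∩ P) := by
    by_contra! heven
    exact Nat.not_odd_iff_even.2 (Finset.even_sum _ fun X hX =>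
      Nat.not_odd_iff_even.1 (heven X hX)) hodd
  exact Finset.mem_biUnion.2 ⟨X, hX, mem_oddTraces.2 ⟨hP, hcut, hXP⟩⟩

-- Every cell of `E` avoiding `D.cut` is odd, so it has an odd trace on some cell of `D`; and there
-- are as many cells of `E` as vertices in `E.cut`.
lemma card_filter_not_disjoint_inner_add_le (h : Crossing D E) :
    #(D.cut ∩ E.cut) + #(E.cut ∩ D.tail) + #(E.cut ∩ D.head) +
        #{C ∈ D.inner | ¬Disjoint E.cut C} ≤
      #{P ∈ E.cells | ¬Disjoint D.cut P} + #(oddTraces D E D.tail) + #(oddTraces D E D.head) := by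
  have hinner : ∑ C ∈ D.inner, #(oddTraces D E C) + #{C ∈ D.inner | ¬Disjoint E.cut C} ≤
      ∑ C ∈ D.inner, #(E.cut ∩ C) := by
    rw [Finset.card_filter, ← Finset.sum_add_distrib]
    refine Finset.sum_le_sum fun C hC => ?_
    split_ifs with hcut
    · simp [h.oddTraces_eq_empty hC hcut]
    · exact h.card_oddTraces_lt hC hcut
  have := h.card_filter_disjoint_le_sum
  rw [D.sum_cells] at this
  have := Finset.card_filter_add_card_filter_not (s := E.cells)
    fun P => Disjoint D.cut P
  have : #E.cells = #E.cut := E.card_components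
  have := D.card_cut_eq_add_sum E
  omega

-- `D.cut` has two more vertices than `D` has inner cells, and an inner cell avoiding `E.cut` lies
-- in a single cell of `E`.
lemma add_sum_card_sub_le (h : Crossing D E) :
    #(D.cut ∩ E.cut) + ∑ P ∈ E.cells, (#(D.cut ∩ P) - #{C ∈ D.inner | C ⊆ P}) ≤
      #{C ∈ D.inner | ¬Disjoint E.cut C} + 2 := by
  have hsub : {C ∈ D.inner | Disjoint E.cut C} ⊆
      E.cells.biUnion fun P => {C ∈ D.inner | C ⊆ P} := by
    intro C hC
    obtain ⟨hC, hcut⟩ := Finset.mem_filter.1 hC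
    obtain ⟨x, hx⟩ := nonempty_of_mem_cells (mem_inner.1 hC).1
    obtain ⟨P, hP, hxP⟩ := E.exists_mem_cells (Finset.disjoint_right.1 hcut hx)
    exact Finset.mem_biUnion.2 ⟨P, hP, Finset.mem_filter.2
      ⟨hC, subset_of_disjoint_cut hC hcut hP (Finset.mem_inter.2 ⟨hx, hxP⟩)⟩⟩
  have := (Finset.card_le_card hsub).trans Finset.card_biUnion_le
  have := Finset.card_filter_add_card_filter_not (s := D.inner)
    fun C => Disjoint E.cut C
  have := D.card_inner_add_two
  have hsum : ∑ P ∈ E.cells, #{C ∈ D.inner | C ⊆ P} +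
      ∑ P ∈ E.cells, (#(D.cut ∩ P) - #{C ∈ D.inner | C ⊆ P}) = ∑ P ∈ E.cells, #(D.cut ∩ P) := by
    rw [← Finset.sum_add_distrib]
    refine Finset.sum_congr rfl fun P hP => ?_
    have := h.card_filter_subset_eq_zero_or hP
    omega
  have := E.card_eq_add_sum D.cut
  simp only [Finset.inter_comm _ D.cut] at this
  omega

lemma card_filter_add_card_richCells_le_sum (h : Crossing D E) :
    #{P ∈ E.cells | ¬Disjoint D.cut P} + #(richCells D E) ≤
      ∑ P ∈ E.cells, (#(D.cut ∩ P) - #{C ∈ D.inner | C ⊆ P}) := by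
  rw [richCells, Finset.card_filter, Finset.card_filter, ← Finset.sum_add_distrib]
  refine Finset.sum_le_sum fun P hP => ?_
  have := h.card_filter_subset_eq_zero_or hP
  simp only [Finset.disjoint_iff_inter_eq_empty, ← Finset.card_eq_zero]
  grind

lemma card_richCells_add_le (h : Crossing D E) :
    #(richCells D E) + 2 * #(D.cut ∩ E.cut) + #(E.cut ∩ D.tail) + #(E.cut ∩ D.head) ≤
      (#(E.cut ∩ D.tail) + #(D.cut ∩ E.cut) - 1) +
        (#(E.cut ∩ D.head) + #(D.cut ∩ E.cut) - 2) + 2 := by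
  have := h.card_filter_not_disjoint_inner_add_le
  have := h.add_sum_card_sub_le
  have := h.card_filter_add_card_richCells_le_sum
  have := h.card_oddTraces_tail_le
  have := h.card_oddTraces_head_le
  omega

lemma card_cut_inter_cut_eq_zero (h : Crossing D E) : #(D.cut ∩ E.cut) = 0 := by
  have := h.card_richCells_add_le
  have := h.card_cut_inter_head_pos
  omega

lemma mem_richCells (h : Crossing D E) (hP : P ∈ E.cells) (h2 : 2 ≤ #(D.cut ∩ P)) :
    P ∈ richCells D E := by
  have := h.card_cut_inter_cut_eq_zero
  have := h.card_filter_subset_eq_zero_or hP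
  exact Finset.mem_filter.2 ⟨hP, by omega⟩

lemma tail_mem_richCells (h : Crossing D E) (hcut : #(E.cut ∩ D.tail) = 0) :
    E.tail ∈ richCells D E := by
  have := h.two_le_card_rim_tail.trans (card_rim_le D.tail_mem_cells)
  have := h.card_cut_inter_cut_eq_zero
  exact h.mem_richCells E.tail_mem_cells (by omega)

lemma card_cut_inter_head_eq_one (h : Crossing D E) : #(E.cut ∩ D.head) = 1 := by
  have := h.card_richCells_add_le
  have := h.card_cut_inter_head_pos
  by_cases hcut : #(E.cut ∩ D.tail) = 0
  · have := Finset.card_pos.2 ⟨_, h.tail_mem_richCells hcut⟩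
    omega
  · omega

lemma card_cut_inter_le_one (h : Crossing D E) (hP : P ∈ E.cells) (hne : P ≠ E.tail) :
    #(D.cut ∩ P) ≤ 1 := by
  by_contra! h2
  have hrich := h.mem_richCells hP h2
  have := h.card_richCells_add_le
  have := h.card_cut_inter_cut_eq_zero
  have := h.card_cut_inter_head_eq_one
  by_cases hcut : #(E.cut ∩ D.tail) = 0
  · have := Finset.one_lt_card.2 ⟨P, hrich, _, h.tail_mem_richCells hcut, hne⟩
    omega
  · have := Finset.card_pos.2 ⟨P, hrich⟩
    omega

lemma exists_erase_head_subset_tail (h : Crossing D E) :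
    ∃ z ∈ D.head, D.head.erase z ⊆ E.tail := by
  obtain ⟨z, hz⟩ := Finset.card_eq_one.1 h.card_cut_inter_head_eq_one
  have hzmem {x} : x ∈ E.cut ∩ D.head ↔ x = z := by rw [hz, Finset.mem_singleton]
  refine ⟨z, (Finset.mem_inter.1 (hzmem.2 rfl)).2, fun x hx => ?_⟩
  obtain ⟨hxz, hx⟩ := Finset.mem_erase.1 hx
  have hxE : x ∉ E.cut := fun hxE => hxz (hzmem.1 (Finset.mem_inter.2 ⟨hxE, hx⟩))
  obtain ⟨P, hP, hxP⟩ := E.exists_mem_cells hxE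
  by_contra hxt
  have hne : P ≠ E.tail := fun hPE => hxt (hPE ▸ hxP)
  have hrim : #(rim D E D.head P) ≤ 2 := by
    have := card_rim_le (E := E) (P := P) D.head_mem_cells
    have := h.card_cut_inter_le_one hP hne
    have := h.card_cut_inter_cut_eq_zero
    have := h.card_cut_inter_head_eq_one
    omega
  have hxempty : x ∈ D.head ∩ P := Finset.mem_inter.2 ⟨hx, hxP⟩
  simp [h.head_inter_eq_empty hP hne hrim] at hxempty

theorem false (h : Crossing D E) : False := by
  obtain ⟨z, hz, hsub⟩ := h.exists_erase_head_subset_tail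
  have hcard := Finset.card_erase_add_one hz
  by_cases hcut : Disjoint D.cut E.tail
  · have htail := tail_subset_tail
      (fun h2 => h.not_disjoint_cut_of_card_cut_eq_two h2 E.tail_mem_cells hcut) hcut
    have hempty : D.head.erase z = ∅ := Finset.eq_empty_of_forall_notMem fun x hx =>
      D.tail_ne_head (eq_of_mem D.tail_mem_cells D.head_mem_cells (htail (hsub hx))
        (Finset.mem_of_mem_erase hx))
    rw [hempty, Finset.card_empty, zero_add] at hcard
    have hrim : rim D E D.tail E.tail ⊆ D.cut ∩ E.cut := by
      have huniq := Finset.card_le_one.1 (h.card_tail_le.trans hcard.ge)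
      rw [rim_eq_of_disjoint hcut]
      intro x hx
      have := huniq u D.left_mem_tail x
      have := E.left_notMem_cut
      grind
    have := h.two_le_card_rim_tail.trans (Finset.card_le_card hrim)
    have := h.card_cut_inter_cut_eq_zero
    omega
  · obtain ⟨s, hsD, hsE⟩ := Finset.not_disjoint_iff.1 hcut
    have hu := D.left_notMem_head
    have hle := Finset.card_le_card
      (Finset.insert_subset hsE (Finset.insert_subset E.left_mem_tail hsub))
    rw [Finset.card_insert_of_notMem, Finset.card_insert_of_notMem] at hle
    · have := h.card_tail_right_le
      omega
    · grind
    · have := D.left_notMem_cut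
      have := notMem_cut D.head_mem_cells (x := s)
      grind

end Crossing

lemma IsObstruction.exists_isMaximalObstruction (hT : IsObstruction G u v T) :
    ∃ S, IsMaximalObstruction G u v S ∧
      component (deleteEdge G u v) T v ⊆ component (deleteEdge G u v) S v := by
  obtain ⟨S, ⟨hS, hTS⟩, hmax⟩ := Set.exists_max_image {S | IsObstruction G u v S ∧
    component (deleteEdge G u v) T v ⊆ component (deleteEdge G u v) S v} Finset.card
    (Set.toFinite _) ⟨T, hT, Finset.Subset.refl _⟩
  refine ⟨S, ⟨hS, fun S' hS' hSS' hdisj => ?_⟩, hTS⟩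
  exact Finset.eq_of_subset_of_card_le hSS'
    (hmax S' ⟨hS', hTS.trans (component_subset_component hdisj)⟩)

lemma IsObstruction.exists_dissection (hG : IsBrick G) (huv : G.Adj u v)
    (hT : IsObstruction G u v T) :
    ∃ D : Dissection G u v, component (deleteEdge G u v) T v ⊆ D.head := by
  obtain ⟨S, hS, hTS⟩ := hT.exists_isMaximalObstruction
  obtain ⟨D, rfl⟩ := hS.exists_dissection hG huv
  exact ⟨D, hTS⟩

lemma _root_.IsMinimalBrick.exists_dissection_of_adj (hG : IsMinimalBrick G) {Z : Set V}
    (hx : x ∈ Z) (hy : y ∈ Z) (hxy : G.Adj x y) :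
    ∃ u ∈ Z, ∃ v ∈ Z, ∃ D : Dissection G u v, ∀ a ∈ Z, ∀ b ∈ Z, G.Adj a b →
      ∀ ⦃T⦄, IsObstruction G a b T → #(component (deleteEdge G a b) T a) ≤ #D.head := by
  obtain ⟨T₀, hT₀⟩ := hG.exists_isObstruction hxy
  obtain ⟨⟨u, v, T⟩, ⟨hu, hv, huv, hT⟩, hmax⟩ := Set.exists_max_image
    {(a, b, T) : V × V × Finset V | a ∈ Z ∧ b ∈ Z ∧ G.Adj a b ∧ IsObstruction G a b T}
    (fun (a, b, T) => #(component (deleteEdge G a b) T b)) (Set.toFinite _)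
    ⟨(x, y, T₀), hx, hy, hxy, hT₀⟩
  obtain ⟨D, hD⟩ := hT.exists_dissection hG.1 huv
  refine ⟨u, hu, v, hv, D, fun a ha b hb hab S hS => ?_⟩
  rw [deleteEdge_comm]
  exact (hmax (b, a, S) ⟨hb, ha, hab.symm, hS.symm⟩).trans (Finset.card_le_card hD)

end MinimalBrick

theorem minimalBrick_three_cubic_vertices {V : Type*} [Fintype V]
    (G : SimpleGraph V) (hG : IsMinimalBrick G) :
    3 ≤ {v : V | (G.neighborSet v).ncard = 3}.ncard := by
  classical
  by_contra! hcubic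
  set C := {v : V | (G.neighborSet v).ncard = 3}
  have hdeg (u) (hu : u ∈ Cᶜ) : 4 ≤ (G.neighborSet u).ncard :=
    (hG.1.1.three_le_ncard_neighborSet u).lt_of_ne' hu
  have hnbr (u) (hu : u ∈ Cᶜ) (v) : ∃ w ∈ Cᶜ, w ≠ v ∧ G.Adj u w := by
    obtain ⟨w, hw, hwv⟩ := Set.exists_mem_notMem_of_ncard_lt_ncard
      (((Set.ncard_insert_le v C).trans hcubic).trans_lt (hdeg u hu))
    exact ⟨w, fun h => hwv (.inr h), fun h => hwv (.inl h), hw⟩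
  obtain ⟨x, hx⟩ : ∃ x, x ∉ C := by
    by_contra! hall
    rw [Set.eq_univ_of_forall hall, Set.ncard_univ, Nat.card_eq_fintype_card] at hcubic
    have := hG.1.1.1
    omega
  obtain ⟨y, hy, -, hxy⟩ := hnbr x hx x
  obtain ⟨u, hu, v, hv, D, hD⟩ := hG.exists_dissection_of_adj hx hy hxy
  obtain ⟨w, hw, hwv, huw⟩ := hnbr u hu v
  obtain ⟨T, hT⟩ := hG.exists_isObstruction huw
  obtain ⟨E, -⟩ := hT.exists_dissection hG.1 huw
  exact MinimalBrick.Crossing.false (D := D) (E := E) ⟨hG.1, hwv.symm, hdeg u hu,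
    hD u hu v hv D.adj (D.isObstruction hG.1), hD u hu w hw huw⟩
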